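/- For every integer m there exist real polynomials P and Q with Q not identically zero such that the rational function p(y) = P(y)/Q(y) satisfies the Painlevé-II equation with parameter m, i.e. p''(y) - 2 p(y)³ - (2/3) y p(y) + (2/3) m = 0 at every y ∈ ℝ with Q(y) ≠ 0. -/

import Mathlib

open Polynomial in
lemma painleve_aux (n : ℕ) : ∃ P Q F : Polynomial ℝ, Q ≠ 0 ∧ ∀ y : ℝ, Q.eval y ≠ 0 →
    HasDerivAt (fun t => P.eval t / Q.eval t)
      (F.eval y / Q.eval y ^ 2 - (P.eval y / Q.eval y) ^ 2 - y / 3) y ∧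
    HasDerivAt (fun t => F.eval t / Q.eval t ^ 2)
      (2 * (P.eval y / Q.eval y) * (F.eval y / Q.eval y ^ 2) + ((2 / 3) * (n : ℝ) + 1 / 3)) y := by
  induction n with
  | zero =>
    refine ⟨0, 1, C (1/3) * X, one_ne_zero, fun y _ => ⟨?_, ?_⟩⟩
    · have := hasDerivAt_const y (0:ℝ)
      refine (this.congr_of_eventuallyEq (Filter.Eventually.of_forall fun t => ?_)).congr_deriv ?_
      · simp
      · simp; ring
    · have := (hasDerivAt_id y).const_mul (1/3 : ℝ)
      refine (this.congr_of_eventuallyEq (Filter.Eventually.of_forall fun t => ?_)).congr_deriv ?_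
      · simp
      · simp
  | succ n ih =>
    obtain ⟨P, Q, F, hQ, h⟩ := ih
    set b : ℝ := (2 / 3) * (n : ℝ) + 1 / 3 with hb
    have hb0 : b ≠ 0 := by positivity
    have hF : F ≠ 0 := by
      rintro rfl
      obtain ⟨y, hy⟩ : ∃ y, Q.eval y ≠ 0 := by
        by_contra! hc
        exact hQ (Polynomial.funext (by simpa using hc))
      have h2 := (h y hy).2
      simp only [eval_zero, zero_div, mul_zero, zero_add] at h2
      exact hb0 (h2.unique (hasDerivAt_const y (0:ℝ)))
    refine ⟨-(P * F + C b * Q ^ 3), Q * F,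
      -F ^ 3 + 2 * (P * F + C b * Q ^ 3) ^ 2 + C (2/3) * X * (Q * F) ^ 2,
      mul_ne_zero hQ hF, ?_⟩
    intro y hy
    have hq : ∀ t, (Q * F).eval t ≠ 0 → HasDerivAt
        (fun t => (-(P * F + C b * Q ^ 3)).eval t / (Q * F).eval t)
        (-(F.eval t / Q.eval t ^ 2) +
          ((-(P * F + C b * Q ^ 3)).eval t / (Q * F).eval t) ^ 2 + t / 3) t := by
      intro t ht
      have ht' := ht
      simp only [eval_mul, mul_ne_zero_iff] at ht'
      obtain ⟨h1, h2⟩ := ht'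
      obtain ⟨hp, hf⟩ := h t h1
      have hd := hp.neg.sub ((hasDerivAt_const t b).div hf (by positivity))
      have hev : ∀ᶠ s in nhds t, (Q * F).eval s ≠ 0 :=
        (Q * F).continuous.continuousAt.eventually_ne ht
      refine (hd.congr_of_eventuallyEq ?_).congr_deriv ?_
      · filter_upwards [hev] with s hs
        simp only [eval_mul, mul_ne_zero_iff] at hs
        obtain ⟨h3, h4⟩ := hs
        simp
        field_simp
        ring
      · simp
        field_simp
        ring
    have hy' := hy
    simp only [eval_mul, mul_ne_zero_iff] at hy'
    obtain ⟨h1, h2⟩ := hy'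
    have hqy := hq y hy
    constructor
    · refine hqy.congr_deriv ?_
      simp
      field_simp
      ring
    · have hf := (h y h1).2
      have hd := (hf.neg.add ((hqy.pow 2).const_mul 2)).add
        ((hasDerivAt_id y).const_mul (2/3 : ℝ))
      have hev : ∀ᶠ s in nhds y, (Q * F).eval s ≠ 0 :=
        (Q * F).continuous.continuousAt.eventually_ne hy
      refine (hd.congr_of_eventuallyEq ?_).congr_deriv ?_
      · filter_upwards [hev] with s hs
        simp only [eval_mul, mul_ne_zero_iff] at hs
        obtain ⟨h3, h4⟩ := hs
        simp
        field_simp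
        ring
      · have e : (n : ℝ) = (3/2) * (b - 1/3) := by rw [hb]; ring
        simp
        rw [e]
        field_simp
        ring

lemma painleve_aux2 (n : ℕ) : ∃ P Q : Polynomial ℝ, Q ≠ 0 ∧
      ∀ y : ℝ, Q.eval y ≠ 0 →
        deriv (deriv (fun t => P.eval t / Q.eval t)) y =
            2 * (P.eval y / Q.eval y) ^ 3 + (2 / 3) * y * (P.eval y / Q.eval y) +
            (2 / 3) * (n : ℝ) := by
  obtain ⟨P, Q, F, hQ, h⟩ := painleve_aux n
  refine ⟨P, Q, hQ, fun y hy => ?_⟩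
  have hev : ∀ᶠ s in nhds y, Q.eval s ≠ 0 := Q.continuous.continuousAt.eventually_ne hy
  obtain ⟨hp, hf⟩ := h y hy
  have hd := (hf.sub (hp.pow 2)).sub ((hasDerivAt_id y).div_const 3)
  have : deriv (fun t => P.eval t / Q.eval t) =ᶠ[nhds y]
      ((fun t => F.eval t / Q.eval t ^ 2) - (fun t => P.eval t / Q.eval t) ^ 2 -
        fun x => id x / 3) := by
    filter_upwards [hev] with s hs using (h s hs).1.deriv
  rw [this.deriv_eq]
  refine Eq.trans (HasDerivAt.deriv hd) ?_
  simp
  ring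

/-- For every integer `m` the Painlevé-II equation with parameter `m` has a rational
solution `p = P/Q` with `P`, `Q` real polynomials, `Q` not identically zero. -/
theorem painleveII_exists_rational_solution (m : ℤ) :
    ∃ P Q : Polynomial ℝ, Q ≠ 0 ∧
      ∀ y : ℝ, Q.eval y ≠ 0 →
        deriv (deriv (fun t => P.eval t / Q.eval t)) y -
            2 * (P.eval y / Q.eval y) ^ 3 - (2 / 3) * y * (P.eval y / Q.eval y) +
            (2 / 3) * (m : ℝ) = 0 := by
  obtain ⟨n, rfl | rfl⟩ := m.eq_nat_or_neg
  · obtain ⟨P, Q, hQ, h⟩ := painleve_aux2 n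
    refine ⟨-P, Q, hQ, fun y hy => ?_⟩
    have e : (fun t => (-P).eval t / Q.eval t) = -(fun t => P.eval t / Q.eval t) := by
      ext t; simp [neg_div]
    have e2 : deriv (-(fun t => P.eval t / Q.eval t)) = -deriv (fun t => P.eval t / Q.eval t) := by
      ext t; exact deriv.neg
    rw [e, e2, deriv.neg, h y hy]
    simp
    ring
  · obtain ⟨P, Q, hQ, h⟩ := painleve_aux2 n
    refine ⟨P, Q, hQ, fun y hy => ?_⟩
    rw [h y hy]
    push_cast
    ring
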